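/- Let G be a group and S a finite generating normal subset of G with 1 ∈ S (normal meaning gSg⁻¹ = S for all g ∈ G). Then any atom H of S containing 1 is (the underlying set of) a normal subgroup of G, and H is also an atom of S⁻¹ containing 1. -/

import Mathlib

open Pointwise

variable {G : Type*} [Group G] [DecidableEq G]

/-- `X` belongs to the family `F(S)`: `X` is nonempty and `XS` is a (finite)
proper subset of `G`. -/
def MemFam (S X : Finset G) : Prop :=
  X.Nonempty ∧ (↑(X * S) : Set G) ≠ Set.univ

/-- `X` is a fragment of `S`: a member of `F(S)` attaining the minimum of
`|XS| - |X|`. -/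
def IsFragment (S X : Finset G) : Prop :=
  MemFam S X ∧ ∀ Y : Finset G, MemFam S Y →
    (X * S).card - X.card ≤ (Y * S).card - Y.card

/-- `X` is an atom of `S`: a fragment of smallest cardinality. -/
def IsAtomOf (S X : Finset G) : Prop :=
  IsFragment S X ∧ ∀ Y : Finset G, IsFragment S Y → X.card ≤ Y.card

/-!
Submodularity of `X ↦ |XS|` makes the intersection of two overlapping fragments `A` and `B` a
fragment as long as `(A ∪ B)S ≠ G`. For two overlapping atoms this side condition follows from
`|A| + |AS| ≤ |G|`, so under that bound distinct atoms are disjoint, and every automorphism of the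
Cayley digraph of `S` that sends some point of an atom `H` into `H` preserves `H`. Left translations
then make an atom through `1` a subgroup. If `S` is conjugation invariant, conjugations are
automorphisms of the Cayley digraph too, so the subgroup is normal; moreover inversion identifies
the Cayley digraphs of `S` and `S⁻¹`, and as the complement of `AS` is a fragment of `S⁻¹` when `G`
is finite, this yields the bound `|A| ≤ |G| - |AS|`.
-/

variable {S X Y A B H : Finset G}

theorem memFam_iff_card_mul_lt :
    MemFam S X ↔ X.Nonempty ∧ ((X * S).card : ℕ∞) < ENat.card G := by
  refine and_congr_right fun _ => ⟨fun hne => ?_, fun hlt huniv => ?_⟩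
  · rw [← Set.encard_coe_eq_coe_finsetCard, ← Set.encard_univ]
    exact (X * S).finite_toSet.encard_lt_encard (Set.ssubset_univ_iff.mpr hne)
  · rw [← Set.encard_coe_eq_coe_finsetCard, huniv, Set.encard_univ] at hlt
    exact lt_irrefl _ hlt

theorem MemFam.mono (hY : MemFam S Y) (hX : X.Nonempty) (hXY : X ⊆ Y) : MemFam S X :=
  ⟨hX, fun huniv => hY.2 <| Set.univ_subset_iff.mp <|
    huniv ▸ Finset.coe_subset.mpr (Finset.mul_subset_mul_right hXY)⟩

theorem isFragment_iff_card_mul_add_card_le (hS : S.Nonempty) :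
    IsFragment S X ↔
      MemFam S X ∧ ∀ Y, MemFam S Y → (X * S).card + Y.card ≤ (Y * S).card + X.card := by
  refine and_congr_right fun _ => forall₂_congr fun Y _ => ?_
  have hXS : X.card ≤ (X * S).card := Finset.card_le_card_mul_right hS
  have hYS : Y.card ≤ (Y * S).card := Finset.card_le_card_mul_right hS
  omega

theorem card_inter_mul_add_card_union_mul_le (S A B : Finset G) :
    ((A ∩ B) * S).card + ((A ∪ B) * S).card ≤ (A * S).card + (B * S).card := by
  rw [Finset.union_mul, ← Finset.card_inter_add_card_union (A * S)]
  gcongr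
  exact Finset.inter_mul_subset

theorem IsFragment.inter (hS : S.Nonempty) (hA : IsFragment S A) (hB : IsFragment S B)
    (hAB : (A ∩ B).Nonempty) (hunion : MemFam S (A ∪ B)) : IsFragment S (A ∩ B) := by
  rw [isFragment_iff_card_mul_add_card_le hS] at hA hB ⊢
  refine ⟨hA.1.mono hAB Finset.inter_subset_left, fun Y hY => ?_⟩
  have submodular := card_inter_mul_add_card_union_mul_le S A B
  have card_AB := Finset.card_inter_add_card_union A B
  have A_le_union := hA.2 _ hunion
  have B_le_Y := hB.2 _ hY
  omega

theorem IsFragment.memFam_union (hS : S.Nonempty) (hB : IsFragment S B) (hAB : (A ∩ B).Nonempty)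
    (hcard : (B.card + (A * S).card : ℕ∞) ≤ ENat.card G) : MemFam S (A ∪ B) := by
  rw [isFragment_iff_card_mul_add_card_le hS] at hB
  rw [memFam_iff_card_mul_lt]
  refine ⟨hAB.mono Finset.inter_subset_union, lt_of_lt_of_le ?_ hcard⟩
  have submodular := card_inter_mul_add_card_union_mul_le S A B
  have B_le_inter := hB.2 _ (hB.1.mono hAB Finset.inter_subset_right)
  have inter_pos := hAB.card_pos
  norm_cast
  omega

theorem IsAtomOf.card_eq (hA : IsAtomOf S A) (hB : IsAtomOf S B) : A.card = B.card :=
  le_antisymm (hA.2 B hB.1) (hB.2 A hA.1)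

theorem IsAtomOf.eq_of_inter_nonempty (hS : S.Nonempty) (hA : IsAtomOf S A) (hB : IsAtomOf S B)
    (hcard : (A.card + (A * S).card : ℕ∞) ≤ ENat.card G) (hAB : (A ∩ B).Nonempty) : A = B := by
  have hunion : MemFam S (A ∪ B) := hB.1.memFam_union hS hAB (hA.card_eq hB ▸ hcard)
  have hinter : IsFragment S (A ∩ B) := hA.1.inter hS hB.1 hAB hunion
  have inter_eq_A : A ∩ B = A :=
    Finset.eq_of_subset_of_card_le Finset.inter_subset_left (hA.2 _ hinter)
  have inter_eq_B : A ∩ B = B :=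
    Finset.eq_of_subset_of_card_le Finset.inter_subset_right (hB.2 _ hinter)
  exact inter_eq_A.symm.trans inter_eq_B

section Complement

variable [Fintype G]

theorem compl_mul_mul_inv_subset (S X : Finset G) : (X * S)ᶜ * S⁻¹ ⊆ Xᶜ := by
  refine Finset.mul_subset_iff.mpr fun y hy t ht => ?_
  rw [Finset.mem_compl] at hy ⊢
  intro hyt
  exact hy (by simpa using Finset.mul_mem_mul hyt (Finset.mem_inv'.mp ht))

theorem MemFam.compl_mul (hX : MemFam S X) : MemFam S⁻¹ (X * S)ᶜ := by
  obtain ⟨⟨x, hx⟩, hXS⟩ := hX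
  constructor
  · rw [Finset.nonempty_iff_ne_empty, Ne, Finset.compl_eq_empty_iff, ← Finset.coe_eq_univ]
    exact hXS
  · refine (Set.ne_univ_iff_exists_notMem _).mpr ⟨x, fun hmem => ?_⟩
    exact Finset.mem_compl.mp (compl_mul_mul_inv_subset S X hmem) hx

theorem card_compl_mul_mul_inv_sub_le (S X : Finset G) :
    ((X * S)ᶜ * S⁻¹).card - (X * S)ᶜ.card ≤ (X * S).card - X.card := by
  have hle := Finset.card_le_card (compl_mul_mul_inv_subset S X)
  have hX := Finset.card_add_card_compl X
  have hXS := Finset.card_add_card_compl (X * S)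
  omega

theorem IsFragment.compl_mul (hX : IsFragment S X) : IsFragment S⁻¹ (X * S)ᶜ := by
  refine ⟨hX.1.compl_mul, fun Z hZ => ?_⟩
  have hmem : MemFam S (Z * S⁻¹)ᶜ := by simpa using hZ.compl_mul
  calc ((X * S)ᶜ * S⁻¹).card - (X * S)ᶜ.card
      ≤ (X * S).card - X.card := card_compl_mul_mul_inv_sub_le S X
    _ ≤ ((Z * S⁻¹)ᶜ * S).card - (Z * S⁻¹)ᶜ.card := hX.2 _ hmem
    _ ≤ (Z * S⁻¹).card - Z.card := by simpa using card_compl_mul_mul_inv_sub_le S⁻¹ Z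

end Complement

/-- The adjacency relation `x → xs`, `s ∈ S`, of the Cayley digraph of `S`. Isomorphisms of Cayley
digraphs are the relation isomorphisms `cayleyRel S ≃r cayleyRel T`. -/
def cayleyRel (S : Finset G) (x y : G) : Prop :=
  x⁻¹ * y ∈ S

theorem mem_mul_iff_exists_cayleyRel {y : G} : y ∈ X * S ↔ ∃ x ∈ X, cayleyRel S x y := by
  rw [Finset.mem_mul]
  refine exists_congr fun x => and_congr_right fun _ => ⟨?_, fun h => ⟨_, h, by group⟩⟩
  rintro ⟨s, hs, rfl⟩
  simpa [cayleyRel] using hs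

section Isomorphism

variable {G' : Type*} [Group G'] [DecidableEq G'] {T : Finset G'}

theorem image_mul_of_cayleyRel_iso (e : cayleyRel S ≃r cayleyRel T) (X : Finset G) :
    (X * S).image e = X.image e * T := by
  ext y
  obtain ⟨y, rfl⟩ := e.surjective y
  simp [mem_mul_iff_exists_cayleyRel, e.map_rel_iff]

theorem card_image_mul_of_cayleyRel_iso (e : cayleyRel S ≃r cayleyRel T) (X : Finset G) :
    (X.image e * T).card = (X * S).card := by
  rw [← image_mul_of_cayleyRel_iso, Finset.card_image_of_injective _ e.injective]

theorem MemFam.image (hX : MemFam S X) (e : cayleyRel S ≃r cayleyRel T) :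
    MemFam T (X.image e) := by
  rw [memFam_iff_card_mul_lt] at hX ⊢
  rw [card_image_mul_of_cayleyRel_iso, ← ENat.card_congr e.toEquiv]
  exact ⟨hX.1.image e, hX.2⟩

theorem IsFragment.image (hX : IsFragment S X) (e : cayleyRel S ≃r cayleyRel T) :
    IsFragment T (X.image e) := by
  refine ⟨hX.1.image e, fun Y hY => ?_⟩
  have hle := hX.2 _ (hY.image e.symm)
  rwa [card_image_mul_of_cayleyRel_iso, Finset.card_image_of_injective _ e.injective,
    ← card_image_mul_of_cayleyRel_iso e.symm Y,
    ← Finset.card_image_of_injective Y e.symm.injective]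

theorem IsAtomOf.image (hX : IsAtomOf S X) (e : cayleyRel S ≃r cayleyRel T) :
    IsAtomOf T (X.image e) := by
  refine ⟨hX.1.image e, fun Y hY => ?_⟩
  have hle := hX.2 _ (hY.image e.symm)
  rwa [Finset.card_image_of_injective _ e.symm.injective,
    ← Finset.card_image_of_injective X e.injective] at hle

end Isomorphism

theorem IsAtomOf.apply_mem (hS : S.Nonempty) (hH : IsAtomOf S H)
    (hcard : (H.card + (H * S).card : ℕ∞) ≤ ENat.card G) (e : cayleyRel S ≃r cayleyRel S)
    {x y : G} (hx : x ∈ H) (hex : e x ∈ H) (hy : y ∈ H) : e y ∈ H := by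
  have hmeet : (H ∩ H.image e).Nonempty :=
    ⟨e x, Finset.mem_inter.mpr ⟨hex, Finset.mem_image_of_mem e hx⟩⟩
  rw [hH.eq_of_inter_nonempty hS (hH.image e) hcard hmeet]
  exact Finset.mem_image_of_mem e hy

/-- Left translation by `g` as an automorphism of the Cayley digraph of `S`. -/
def cayleyRelMulLeft (S : Finset G) (g : G) : cayleyRel S ≃r cayleyRel S where
  toEquiv := Equiv.mulLeft g
  map_rel_iff' := by simp [cayleyRel, mul_assoc]

theorem IsAtomOf.exists_subgroup (hS : S.Nonempty) (hH : IsAtomOf S H) (one_mem : (1 : G) ∈ H)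
    (hcard : (H.card + (H * S).card : ℕ∞) ≤ ENat.card G) :
    ∃ N : Subgroup G, (N : Set G) = H := by
  have inv_mul_mem {a b : G} (ha : a ∈ H) (hb : b ∈ H) : a⁻¹ * b ∈ H :=
    hH.apply_mem hS hcard (cayleyRelMulLeft S a⁻¹) ha
      (show a⁻¹ * a ∈ H by rwa [inv_mul_cancel]) hb
  have inv_mem {a : G} (ha : a ∈ H) : a⁻¹ ∈ H := by simpa using inv_mul_mem ha one_mem
  exact ⟨{ carrier := H
           one_mem' := one_mem
           mul_mem' := fun ha hb => by simpa using inv_mul_mem (inv_mem ha) hb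
           inv_mem' := inv_mem }, rfl⟩

/-- Normality of a subset of a group: `S` is closed under conjugation. -/
def IsConjInvariant (S : Finset G) : Prop :=
  ∀ g x : G, g * x * g⁻¹ ∈ S ↔ x ∈ S

/-- Conjugation by `g` as an automorphism of the Cayley digraph of a normal set. -/
def IsConjInvariant.cayleyRelConj (hS : IsConjInvariant S) (g : G) :
    cayleyRel S ≃r cayleyRel S where
  toEquiv := (MulAut.conj g).toEquiv
  map_rel_iff' {x y} := by
    rw [cayleyRel, cayleyRel, ← hS g (x⁻¹ * y)]
    simp [mul_assoc]

/-- Inversion as an isomorphism from the Cayley digraph of a normal set `S` to that of `S⁻¹`. -/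
def IsConjInvariant.cayleyRelInv (hS : IsConjInvariant S) : cayleyRel S ≃r cayleyRel S⁻¹ where
  toEquiv := Equiv.inv G
  map_rel_iff' {x y} := by
    rw [cayleyRel, cayleyRel, ← hS x (x⁻¹ * y)]
    simp

theorem IsAtomOf.inv (hH : IsAtomOf S H) (hS : IsConjInvariant S) : IsAtomOf S⁻¹ H⁻¹ :=
  hH.image hS.cayleyRelInv

theorem IsAtomOf.card_add_card_mul_le (hA : IsAtomOf S A) (hS : IsConjInvariant S) :
    (A.card + (A * S).card : ℕ∞) ≤ ENat.card G := by
  cases finite_or_infinite G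
  · have := Fintype.ofFinite G
    have hfragment : IsFragment S ((A * S)ᶜ.image hS.cayleyRelInv.symm) :=
      hA.1.compl_mul.image hS.cayleyRelInv.symm
    have hle : A.card ≤ (A * S)ᶜ.card :=
      (hA.2 _ hfragment).trans_eq (Finset.card_image_of_injective _ hS.cayleyRelInv.symm.injective)
    have hcompl := Finset.card_add_card_compl (A * S)
    rw [ENat.card_eq_coe_fintype_card]
    norm_cast
    omega
  · simp

theorem stmt_9_general (hS : S.Nonempty) (hnormal : IsConjInvariant S) (hH : IsAtomOf S H)
    (h1H : (1 : G) ∈ H) :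
    (∃ N : Subgroup G, N.Normal ∧ (N : Set G) = (H : Set G)) ∧ IsAtomOf S⁻¹ H := by
  have hcard := hH.card_add_card_mul_le hnormal
  obtain ⟨N, hN⟩ := hH.exists_subgroup hS h1H hcard
  have mem_N {x : G} : x ∈ N ↔ x ∈ H := Set.ext_iff.mp hN x
  have conj_mem (n : G) (hn : n ∈ N) (g : G) : g * n * g⁻¹ ∈ N :=
    mem_N.mpr <| hH.apply_mem hS hcard (hnormal.cayleyRelConj g) h1H
      (show g * 1 * g⁻¹ ∈ H by rwa [mul_one, mul_inv_cancel]) (mem_N.mp hn)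
  have inv_eq : H⁻¹ = H := by
    ext x
    rw [Finset.mem_inv', ← mem_N, ← mem_N, inv_mem_iff]
  exact ⟨⟨N, ⟨conj_mem⟩, hN⟩, inv_eq ▸ hH.inv hnormal⟩

/-- Let `G` be a group and `S` a finite generating normal subset of `G` with
`1 ∈ S` (normal: `gSg⁻¹ = S` for all `g`). Then any atom `H` of `S` containing `1`
is the underlying set of a normal subgroup of `G`, and `H` is also an atom of
`S⁻¹` (containing `1`). -/
theorem stmt_9 {G : Type*} [Group G] [DecidableEq G] (S : Finset G)
    (h1 : (1 : G) ∈ S) (hgen : Subgroup.closure (S : Set G) = ⊤)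
    (hnormal : ∀ g x : G, g * x * g⁻¹ ∈ S ↔ x ∈ S)
    (H : Finset G) (hH : IsAtomOf S H) (h1H : (1 : G) ∈ H) :
    (∃ N : Subgroup G, N.Normal ∧ (N : Set G) = (H : Set G)) ∧
    IsAtomOf S⁻¹ H :=
  stmt_9_general ⟨1, h1⟩ hnormal hH h1H
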